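/- arXiv:1904.06894 — 2 statements merged into one kernel-verified Lean document; each statement's English description precedes it below -/
import Mathlib

section
/- For all integers n ≥ 1, k ≥ 1 and 0 ≤ j ≤ k, the fixed-point set of ρ_j inside the Milnor fiber V is exactly Fix(ρ_j) ∩ V = {z ∈ ℂ^{n+1} : there exists t ∈ ℝ with z_0 = t·ξ_j, Re z_m = 0 for all 1 ≤ m ≤ n, and t^{k+1} − Σ_{m=1}^{n} (Im z_m)^2 = 1}. -/
open Complex

/-- The root of unity `ξ_j = exp(2πi·j/(k+1))`. -/
noncomputable def milnorXi (k j : ℕ) : ℂ :=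
  Complex.exp (2 * Real.pi * Complex.I * j / (k + 1))

/-- The anti-symplectic involution
`ρ_j(z) = (ξ_j² · conj z₀, −conj z₁, …, −conj zₙ)`. -/
noncomputable def milnorRho (n k j : ℕ) (z : Fin (n + 1) → ℂ) : Fin (n + 1) → ℂ :=
  fun m => if m = 0 then (milnorXi k j) ^ 2 * (starRingEnd ℂ) (z 0)
           else -((starRingEnd ℂ) (z m))

/-- The A_k-type Milnor fiber `V = {z : z₀^{k+1} + z₁² + ⋯ + zₙ² = 1}`. -/
def milnorFiber (n k : ℕ) : Set (Fin (n + 1) → ℂ) :=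
  {z | z 0 ^ (k + 1) + ∑ m : Fin n, (z m.succ) ^ 2 = 1}

/-!
Write `ξ` for `ξ_j`. Since `|ξ| = 1`, the equation `ξ² · conj w = w` says that `conj ξ * w` is
real, so its solutions are exactly the real line `ℝ · ξ` (`milnorXi_sq_mul_conj_eq_iff`), while
`-conj w = w` says that `w` is purely imaginary. On such points `z₀^{k+1} = t^{k+1}` because
`ξ^{k+1} = 1`, and `z_m² = -(Im z_m)²`, so the complex equation of the Milnor fiber is the
stated real equation (`milnorFiber_iff_real`).
-/

theorem milnorXi_pow (k j : ℕ) : milnorXi k j ^ (k + 1) = 1 := by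
  have hk : (k : ℂ) + 1 ≠ 0 := by exact_mod_cast Nat.succ_ne_zero k
  rw [milnorXi, ← Complex.exp_nat_mul, Complex.exp_eq_one_iff]
  refine ⟨j, ?_⟩
  push_cast
  field_simp

theorem milnorXi_mul_conj (k j : ℕ) :
    milnorXi k j * (starRingEnd ℂ) (milnorXi k j) = 1 := by
  have h : ‖milnorXi k j‖ = 1 :=
    Complex.norm_eq_one_of_pow_eq_one (milnorXi_pow k j) (Nat.succ_ne_zero k)
  rw [Complex.mul_conj, Complex.normSq_eq_norm_sq, h]
  norm_num

/-- The reflection `w ↦ ξ² · conj w` of `ℂ` fixes exactly the real line spanned by `ξ`. -/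
theorem milnorXi_sq_mul_conj_eq_iff (k j : ℕ) (w : ℂ) :
    milnorXi k j ^ 2 * (starRingEnd ℂ) w = w ↔ ∃ t : ℝ, w = (t : ℂ) * milnorXi k j := by
  have hx := milnorXi_mul_conj k j
  constructor
  · intro h
    have hreal : (starRingEnd ℂ) ((starRingEnd ℂ) (milnorXi k j) * w)
        = (starRingEnd ℂ) (milnorXi k j) * w := by
      rw [map_mul, Complex.conj_conj]
      linear_combination (starRingEnd ℂ) (milnorXi k j) * h
        - milnorXi k j * (starRingEnd ℂ) w * hx
    obtain ⟨t, ht⟩ := Complex.conj_eq_iff_real.mp hreal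
    exact ⟨t, by linear_combination milnorXi k j * ht - w * hx⟩
  · rintro ⟨t, rfl⟩
    rw [map_mul, Complex.conj_ofReal]
    linear_combination (t : ℂ) * milnorXi k j * hx

theorem neg_conj_eq_iff (w : ℂ) : -(starRingEnd ℂ) w = w ↔ w.re = 0 := by
  rw [Complex.ext_iff]
  simp only [neg_re, conj_re, neg_im, conj_im, neg_neg, and_true]
  constructor <;> intro h <;> linarith

theorem milnorRho_eq_self_iff (n k j : ℕ) (z : Fin (n + 1) → ℂ) :
    milnorRho n k j z = z ↔
      (∃ t : ℝ, z 0 = (t : ℂ) * milnorXi k j) ∧ ∀ m : Fin n, (z m.succ).re = 0 := by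
  rw [funext_iff, Fin.forall_fin_succ]
  simp only [milnorRho, if_true, Fin.succ_ne_zero, if_false, milnorXi_sq_mul_conj_eq_iff,
    neg_conj_eq_iff]

/-- On a fixed point of `ρ_j`, the equation of the Milnor fiber is a real equation. -/
theorem milnorFiber_iff_real (n k j : ℕ) (z : Fin (n + 1) → ℂ) (t : ℝ)
    (h0 : z 0 = (t : ℂ) * milnorXi k j) (hre : ∀ m : Fin n, (z m.succ).re = 0) :
    z ∈ milnorFiber n k ↔ t ^ (k + 1) - ∑ m : Fin n, ((z m.succ).im) ^ 2 = 1 := by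
  have hsq : ∀ m : Fin n, z m.succ ^ 2 = -(((z m.succ).im ^ 2 : ℝ) : ℂ) := by
    intro m
    have hz : z m.succ = ((z m.succ).im : ℂ) * I := by
      apply Complex.ext <;> simp [hre m]
    conv_lhs => rw [hz, mul_pow, I_sq]
    push_cast
    ring
  change z 0 ^ (k + 1) + ∑ m : Fin n, (z m.succ) ^ 2 = 1 ↔ _
  rw [h0, mul_pow, milnorXi_pow, mul_one, Finset.sum_congr rfl fun m _ => hsq m,
    Finset.sum_neg_distrib, ← sub_eq_add_neg]
  exact_mod_cast Iff.rfl

theorem fixed_point_set_description (n k j : ℕ)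
    (hn : 1 ≤ n) (hk : 1 ≤ k) (hj : j ≤ k) :
    {z : Fin (n + 1) → ℂ | milnorRho n k j z = z} ∩ milnorFiber n k =
    {z : Fin (n + 1) → ℂ | ∃ t : ℝ, z 0 = (t : ℂ) * milnorXi k j ∧
      (∀ m : Fin n, (z m.succ).re = 0) ∧
      t ^ (k + 1) - ∑ m : Fin n, ((z m.succ).im) ^ 2 = 1} := by
  ext z
  rw [Set.mem_inter_iff, Set.mem_ofPred_eq, Set.mem_ofPred_eq, milnorRho_eq_self_iff]
  constructor
  · rintro ⟨⟨⟨t, h0⟩, hre⟩, hV⟩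
    exact ⟨t, h0, hre, (milnorFiber_iff_real n k j z t h0 hre).mp hV⟩
  · rintro ⟨t, h0, hre, ht⟩
    exact ⟨⟨⟨t, h0⟩, hre⟩, (milnorFiber_iff_real n k j z t h0 hre).mpr ht⟩
end

section
/- Let n ≥ 3 and k ≥ 2 be integers and set I = (n−2)(k+1)+2. Let A be an associative unital ℤ-graded algebra over the field ℤ/2ℤ with grading 𝒜 such that, for every d ∈ ℤ, the homogeneous component 𝒜_d is one-dimensional over ℤ/2ℤ (i.e., has exactly one nonzero element) if d = I·N or d = I·N − (n−1) for some N ∈ ℤ, and 𝒜_d = 0 otherwise. Suppose there is an additive bijection S : A → A with S(𝒜_d) ⊆ 𝒜_{d+I} for every d ∈ ℤ and S(a·b) = S(a)·b = a·S(b) for all a, b ∈ A. Then there exist nonzero elements x ∈ 𝒜_{I−n+1} and y ∈ 𝒜_I such that: y is invertible in A with y⁻¹ ∈ 𝒜_{−I}, both x and y are central in A, x·x = 0, and for every N ∈ ℤ the unique nonzero element of 𝒜_{I·N} is y^N and the unique nonzero element of 𝒜_{I·N−n+1} is x·y^{N−1}. Consequently A is isomorphic as a graded ring to ℤ/2ℤ[x,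 y, y⁻¹]/(x²) with deg x = I−n+1 and deg y = I. -/
/-!
Put `y = S 1`. The module property makes `S` multiplication by `y` on either side, so `y` is central.
It is a unit: `S` maps the nonzero element of `𝒜 (-I)` to a nonzero element of `𝒜 0`,
which can only be `1`. Powers of `y` and their products with the nonzero element `x` of
`𝒜 (I - (n - 1))` are then nonzero, so they are the only nonzero homogeneous elements. All of them
commute with `x`, and they span `A`, so `x` is central. Finally `I > 2 (n - 1) > 0`, so the degree
`2 I - 2 (n - 1)` of `x * x` is not one in which `A` is nonzero.
-/


/-- The algebraic computation of the ring structure of the v-shaped wrapped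
Floer homology of the real Lagrangians in the A_k-type Milnor fiber: a
ℤ-graded unital `ℤ/2ℤ`-algebra whose graded pieces are one-dimensional exactly
in degrees `I·N` and `I·N − (n−1)` (`I = (n−2)(k+1)+2`), admitting a degree-`I`
additive bijection `S` with the module property, is the ring
`ℤ/2ℤ[x, y, y⁻¹]/(x²)` with `deg x = I − n + 1`, `deg y = I`. -/
theorem vshaped_ring_structure (n k : ℕ) (hn : 3 ≤ n) (hk : 2 ≤ k)
    {A : Type*} [Ring A] [Algebra (ZMod 2) A]
    (𝒜 : ℤ → Submodule (ZMod 2) A)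
    (hinternal : DirectSum.IsInternal 𝒜)
    (hone : (1 : A) ∈ 𝒜 0)
    (hmul : ∀ (d e : ℤ) (a b : A), a ∈ 𝒜 d → b ∈ 𝒜 e → a * b ∈ 𝒜 (d + e))
    (I : ℤ) (hI : I = ((n : ℤ) - 2) * ((k : ℤ) + 1) + 2)
    (hdim1 : ∀ d : ℤ, (∃ N : ℤ, d = I * N ∨ d = I * N - ((n : ℤ) - 1)) →
      ∃! a : A, a ∈ 𝒜 d ∧ a ≠ 0)
    (hdim0 : ∀ d : ℤ, (¬ ∃ N : ℤ, d = I * N ∨ d = I * N - ((n : ℤ) - 1)) →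
      ∀ a ∈ 𝒜 d, a = 0)
    (S : A → A) (hSbij : Function.Bijective S)
    (hSadd : ∀ a b : A, S (a + b) = S a + S b)
    (hSgr : ∀ d : ℤ, ∀ a ∈ 𝒜 d, S a ∈ 𝒜 (d + I))
    (hSl : ∀ a b : A, S (a * b) = S a * b)
    (hSr : ∀ a b : A, S (a * b) = a * S b) :
    ∃ (x : A) (u : Aˣ),
      x ∈ 𝒜 (I - ((n : ℤ) - 1)) ∧ x ≠ 0 ∧
      (u : A) ∈ 𝒜 I ∧ (u : A) ≠ 0 ∧
      ((u⁻¹ : Aˣ) : A) ∈ 𝒜 (-I) ∧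
      (∀ a : A, x * a = a * x) ∧
      (∀ a : A, (u : A) * a = a * (u : A)) ∧
      x * x = 0 ∧
      (∀ N : ℤ, ((u ^ N : Aˣ) : A) ∈ 𝒜 (I * N) ∧ ((u ^ N : Aˣ) : A) ≠ 0 ∧
        ∀ a ∈ 𝒜 (I * N), a ≠ 0 → a = ((u ^ N : Aˣ) : A)) ∧
      (∀ N : ℤ, x * ((u ^ (N - 1) : Aˣ) : A) ∈ 𝒜 (I * N - ((n : ℤ) - 1)) ∧
        x * ((u ^ (N - 1) : Aˣ) : A) ≠ 0 ∧
        ∀ a ∈ 𝒜 (I * N - ((n : ℤ) - 1)), a ≠ 0 → a = x * ((u ^ (N - 1) : Aˣ) : A)) := by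
  have hS : ∀ a, S a = S 1 * a := fun a => by simpa using hSl 1 a
  have hS' : ∀ a, S a = a * S 1 := fun a => by simpa using hSr a 1
  have hS0 : S 0 = 0 := by simpa using hS 0
  obtain ⟨e, ⟨he, he0⟩, -⟩ := hdim1 0 ⟨0, Or.inl (by simp)⟩
  have : Nontrivial A := ⟨e, 0, he0⟩
  obtain ⟨w, ⟨hw, hw0⟩, -⟩ := hdim1 (-I) ⟨-1, Or.inl (by ring)⟩
  have hSw : S w = 1 := by
    refine (hdim1 0 ⟨0, Or.inl (by simp)⟩).unique ⟨?_, fun h => ?_⟩ ⟨hone, one_ne_zero⟩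
    · simpa using hSgr _ w hw
    · exact hw0 (hSbij.1 (h.trans hS0.symm))
  let u : Aˣ := ⟨S 1, w, (hS w).symm.trans hSw, (hS' w).symm.trans hSw⟩
  have hu : (u : A) ∈ 𝒜 I := by simpa using hSgr 0 1 hone
  have hu' : ((u⁻¹ : Aˣ) : A) ∈ 𝒜 (-I) := hw
  have hucomm : ∀ a : A, (u : A) * a = a * (u : A) := fun a => (hS a).symm.trans (hS' a)
  have hpow : ∀ N : ℤ, ((u ^ N : Aˣ) : A) ∈ 𝒜 (I * N) := by
    intro N
    induction N using Int.induction_on with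
    | zero => simpa using hone
    | succ m ih =>
      rw [zpow_add_one, Units.val_mul, mul_add, mul_one]
      exact hmul _ _ _ _ ih hu
    | pred m ih =>
      rw [zpow_sub_one, Units.val_mul, mul_sub, mul_one, sub_eq_add_neg]
      exact hmul _ _ _ _ ih hu'
  obtain ⟨x, ⟨hx, hx0⟩, -⟩ := hdim1 (I - ((n : ℤ) - 1)) ⟨1, Or.inr (by ring)⟩
  have hxpow : ∀ N : ℤ, x * ((u ^ (N - 1) : Aˣ) : A) ∈ 𝒜 (I * N - ((n : ℤ) - 1)) := by
    intro N
    convert hmul _ _ _ _ hx (hpow (N - 1)) using 2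
    ring
  have hxpow0 : ∀ N : ℤ, x * ((u ^ (N - 1) : Aˣ) : A) ≠ 0 := fun N h =>
    hx0 ((Units.mul_left_eq_zero _).1 h)
  have huniq : ∀ N : ℤ, ∀ a ∈ 𝒜 (I * N), a ≠ 0 → a = ((u ^ N : Aˣ) : A) := fun N a ha ha0 =>
    (hdim1 _ ⟨N, Or.inl rfl⟩).unique ⟨ha, ha0⟩ ⟨hpow N, Units.ne_zero _⟩
  have hxuniq : ∀ N : ℤ, ∀ a ∈ 𝒜 (I * N - ((n : ℤ) - 1)), a ≠ 0 →
      a = x * ((u ^ (N - 1) : Aˣ) : A) := fun N a ha ha0 =>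
    (hdim1 _ ⟨N, Or.inr rfl⟩).unique ⟨ha, ha0⟩ ⟨hxpow N, hxpow0 N⟩
  have hxu : ∀ N : ℤ, Commute x ((u ^ N : Aˣ) : A) := fun N =>
    Commute.units_zpow_right (show Commute x (u : A) from (hucomm x).symm) N
  have hxcomm : ∀ a : A, Commute x a := by
    intro a
    have ha : a ∈ ⨆ d, 𝒜 d := by
      rw [hinternal.submodule_iSup_eq_top]
      trivial
    induction ha using Submodule.iSup_induction' with
    | mem d a ha =>
      rcases eq_or_ne a 0 with rfl | ha0
      · exact Commute.zero_right x
      by_cases hd : ∃ N : ℤ, d = I * N ∨ d = I * N - ((n : ℤ) - 1)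
      · obtain ⟨N, rfl | rfl⟩ := hd
        · rw [huniq N a ha ha0]
          exact hxu N
        · rw [hxuniq N a ha ha0]
          exact (Commute.refl x).mul_right (hxu _)
      · exact absurd (hdim0 d hd a ha) ha0
    | zero => exact Commute.zero_right x
    | add a b _ _ iha ihb => exact iha.add_right ihb
  have hn' : (3 : ℤ) ≤ n := by exact_mod_cast hn
  have hk' : (2 : ℤ) ≤ k := by exact_mod_cast hk
  -- `I ≥ 3 (n - 2) + 2`, and `3 n - 4 > 2 n - 2` because `n > 2`.
  have hIn : 2 * ((n : ℤ) - 1) < I := by nlinarith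
  have hxx : x * x = 0 := by
    refine hdim0 _ ?_ _ (hmul _ _ _ _ hx hx)
    -- A degree in the support would make `I` divide `2 (n - 1)` or `n - 1`.
    rintro ⟨N, h | h⟩
    · have := Int.le_of_dvd (by linarith)
        (show I ∣ 2 * ((n : ℤ) - 1) from ⟨2 - N, by linear_combination -h⟩)
      linarith
    · have := Int.le_of_dvd (by linarith)
        (show I ∣ (n : ℤ) - 1 from ⟨2 - N, by linear_combination -h⟩)
      linarith
  exact ⟨x, u, hx, hx0, hu, u.ne_zero, hu', hxcomm, hucomm, hxx,
    fun N => ⟨hpow N, Units.ne_zero _, huniq N⟩, fun N => ⟨hxpow N, hxpow0 N, hxuniq N⟩⟩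
end
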